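/- Let R = B_q(α,δ,b) be a Reed–Solomon code of length r (that is, a univariate BCH code in A_q(r) with r = q − 1, designed distance δ and defining set the union of the q-cyclotomic cosets of \overline{b},…,\overline{b+δ−2} modulo r). Then, for each positive integer n with gcd(n,q) = 1 and each α' ∈ U_n, the multivariate BCH code C = B_q((α',α),{2},{δ},{b}) in A_q(n,r) satisfies dim_{F_q}(C) = (r − δ + 1)·n = n·dim_{F_q}(R) and d_{(α',α)}*(C) = δ. -/

import Mathlib

open Classical

noncomputable section

namespace AbelianCodes

/-- The index set `I = Z_{r 0} × ⋯ × Z_{r (s-1)}`. -/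
abbrev Idx {s : ℕ} (r : Fin s → ℕ) : Type := ∀ k, ZMod (r k)

variable {F : Type*} [Field F]

/-- The support of a hypermatrix. -/
def hsupp {s : ℕ} {r : Fin s → ℕ} (M : Idx r → F) : Set (Idx r) := {i | M i ≠ 0}

/-- The hypercolumn `H_M(k,b)` of a hypermatrix, viewed as an `(s-1)`-dimensional
hypermatrix indexed by `∏_{j ≠ k} Z_{r j}`. -/
def hypercol {s : ℕ} {r : Fin (s+1) → ℕ} (M : Idx r → F) (k : Fin (s+1)) (b : ZMod (r k)) :
    Idx (fun j => r (k.succAbove j)) → F :=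
  fun i => M (k.insertNth b i)

/-- `ω_M(k,b)`: the number of consecutive zero hypercolumns
`H_M(k,b+1), H_M(k,b+2), …` (indices modulo `r k`). -/
def runLen {s : ℕ} {r : Fin (s+1) → ℕ} (M : Idx r → F) (k : Fin (s+1)) (b : ZMod (r k)) : ℕ :=
  ((Finset.Ico 1 (r k)).filter
    (fun j => ∀ m : ℕ, m ∈ Finset.Icc 1 j → hypercol M k (b + (m : ZMod (r k))) = 0)).card

/-- The apparent distance `d*(M)` of a hypermatrix, defined recursively on the
number of variables.  (A `0`-dimensional hypermatrix is a scalar, of apparent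
distance `1` if nonzero and `0` otherwise; with this convention the `1`-dimensional
case becomes `max {ω_M(b)+1 : a_b ≠ 0}` and the higher-dimensional case becomes
`max_k max {(ω_M(k,b)+1)·d*(H_M(k,b)) : H_M(k,b) ≠ 0}`, since zero hypermatrices
have apparent distance `0`.) -/
def apd : {s : ℕ} → (r : Fin s → ℕ) → (Idx r → F) → ℕ
  | 0, _, M => if M finZeroElim = 0 then 0 else 1
  | _+1, r, M =>
      Finset.univ.sup fun k =>
        Finset.univ.sup fun b : Fin (r k) =>
          (runLen M k ((b : ℕ) : ZMod (r k)) + 1) *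
            apd (fun j => r (k.succAbove j)) (hypercol M k ((b : ℕ) : ZMod (r k)))

/-- The `q^t`-orbit `Q_t(a)` of `a ∈ I`. -/
def qOrbit {s : ℕ} (r : Fin s → ℕ) (q t : ℕ) (a : Idx r) : Set (Idx r) :=
  {i | ∃ n : ℕ, ∀ k, i k = (q : ZMod (r k)) ^ (t * n) * a k}

/-- `D` is a union of `q^t`-orbits. -/
def OrbitUnion {s : ℕ} (r : Fin s → ℕ) (q t : ℕ) (D : Set (Idx r)) : Prop :=
  ∀ a ∈ D, qOrbit r q t a ⊆ D

/-- The hypermatrix afforded by `D ⊆ I`: entry `0` at indices in `D`, entry `1` elsewhere. -/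
def afforded {s : ℕ} (r : Fin s → ℕ) (D : Set (Idx r)) : Idx r → F :=
  fun i => if i ∈ D then 0 else 1

/-- `M` is a `q^t`-orbits hypermatrix, i.e. the hypermatrix afforded by some union
of `q^t`-orbits. -/
def IsOrbitMx {s : ℕ} (r : Fin s → ℕ) (q t : ℕ) (M : Idx r → F) : Prop :=
  ∃ D : Set (Idx r), OrbitUnion r q t D ∧ M = afforded r D

/-- The minimum apparent distance `mad(M) = min {d*(P) : P a q^t-orbits hypermatrix,
`0 ≠ P ≤ M`}`, where `P ≤ M` means `supp P ⊆ supp M`. -/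
def mad {s : ℕ} (r : Fin s → ℕ) (q t : ℕ) (M : Idx r → F) : ℕ :=
  sInf {d | ∃ P : Idx r → F, IsOrbitMx r q t P ∧ P ≠ 0 ∧ hsupp P ⊆ hsupp M ∧ apd r P = d}

/-- The `q^t`-cyclotomic coset of `b` modulo `r`. -/
def cycCoset (r q t : ℕ) (b : ZMod r) : Set (ZMod r) :=
  {x | ∃ n : ℕ, x = (q : ZMod r) ^ (t * n) * b}



variable {F : Type*} [Field F] {L : Type*} [Field L] [Algebra F L]

/-- An abelian code: a subspace of the group algebra `F[∏ Z_{r k}]` (identified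
with the space of coefficient functions `I → F`) which is closed under all
translations, i.e. an ideal. -/
def IsAbelianCode {s : ℕ} {r : Fin s → ℕ} (C : Submodule F (Idx r → F)) : Prop :=
  ∀ f ∈ C, ∀ a : Idx r, (fun i => f (i - a)) ∈ C

/-- Convolution: the multiplication of the group algebra in the coefficient
function picture. -/
def conv {s : ℕ} {r : Fin s → ℕ} [∀ k, NeZero (r k)] (f g : Idx r → F) : Idx r → F :=
  fun i => ∑ u : Idx r, f u * g (i - u)

/-- The (discrete) Fourier transform `φ_{α,f}(j) = f(α^j)` of a coefficient
function `f : I → F` with respect to `α`, with values in the extension `L`. -/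
def fourier {s : ℕ} {r : Fin s → ℕ} [∀ k, NeZero (r k)] (α : Fin s → L) (f : Idx r → F) :
    Idx r → L :=
  fun j => ∑ i : Idx r, algebraMap F L (f i) * ∏ k, α k ^ ((i k).val * (j k).val)

/-- The Hamming weight of a codeword. -/
def wt {s : ℕ} {r : Fin s → ℕ} [∀ k, NeZero (r k)] (f : Idx r → F) : ℕ :=
  (Finset.univ.filter fun i : Idx r => f i ≠ 0).card

/-- The minimum distance of a code. -/
def dmin {s : ℕ} {r : Fin s → ℕ} [∀ k, NeZero (r k)] (C : Submodule F (Idx r → F)) : ℕ :=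
  sInf {w | ∃ f ∈ C, f ≠ (0 : Idx r → F) ∧ wt f = w}

/-- The defining set `D_α(C) = {a ∈ I : f(α^a) = 0 for all f ∈ C}`. -/
def defSet {s : ℕ} (r : Fin s → ℕ) [∀ k, NeZero (r k)] (α : Fin s → L)
    (C : Submodule F (Idx r → F)) : Set (Idx r) :=
  {a | ∀ f ∈ C, fourier α f a = 0}

/-- The apparent distance of a code `C` with respect to `α`:
`d_α*(C) = min {d*(M(φ_{α,e})) : 0 ≠ e = e² ∈ C}`. -/
def dStarAlpha {s : ℕ} (r : Fin s → ℕ) [∀ k, NeZero (r k)] (α : Fin s → L)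
    (C : Submodule F (Idx r → F)) : ℕ :=
  sInf {d | ∃ e, e ∈ C ∧ e ≠ (0 : Idx r → F) ∧ conv e e = e ∧ apd r (fourier α e) = d}

/-- The apparent distance of a code: `d*(C) = max {d_β*(C) : β ∈ U}`, where `U`
is the set of tuples of primitive roots of unity in `L`. -/
def dStarCode {s : ℕ} (r : Fin s → ℕ) [∀ k, NeZero (r k)] (L : Type*) [Field L] [Algebra F L]
    (C : Submodule F (Idx r → F)) : ℕ :=
  sSup {d | ∃ α : Fin s → L, (∀ k, IsPrimitiveRoot (α k) (r k)) ∧ dStarAlpha r α C = d}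

/-- The defining set of the multivariate BCH code `B_q(α,γ,δ,b)`:
`∪_{k∈γ} ∪_{l=0}^{δ_k−2} ∪_{i ∈ I(k, b_k+l)} Q(i)`. -/
def bchDefSet {s : ℕ} (r : Fin s → ℕ) (q : ℕ) (γ : Finset (Fin s)) (δ b : Fin s → ℕ) :
    Set (Idx r) :=
  ⋃ k ∈ γ, ⋃ l ∈ Finset.range (δ k - 1),
    ⋃ i ∈ {i : Idx r | i k = ((b k + l : ℕ) : ZMod (r k))}, qOrbit r q 1 i


/-!
Over `L` the Fourier transform is bijective, so an abelian code consists exactly of the words whose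
transform vanishes on its defining set, and its dimension is the number of remaining frequencies.
As `q ≡ 1` modulo the length of the Reed–Solomon code, all `q`-cyclotomic cosets of that coordinate
are singletons, and the defining set of `C` is the slab over `δ - 1` consecutive residues. Every
nonzero word of `C` then has apparent distance at least `δ` by the BCH argument. For the idempotent
whose transform is the indicator of the complement of the slab, no direction does better: along the
distinguished coordinate the longest gap is the window itself, and no other direction has gaps.
-/

section ScalarExtension

variable {ι : Type*}

/-- The `L`-span of a code `C` over `F` inside the space of `L`-valued words. -/
def scalarExtension (L : Type*) [Field L] [Algebra F L] (C : Submodule F (ι → F)) :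
    Submodule L (ι → L) :=
  Submodule.span L ((algebraMap F L ∘ ·) '' (C : Set (ι → F)))

theorem algebraMap_comp_mem_scalarExtension {C : Submodule F (ι → F)} {f : ι → F} (hf : f ∈ C) :
    algebraMap F L ∘ f ∈ scalarExtension L C :=
  Submodule.subset_span ⟨f, hf, rfl⟩

theorem scalarExtension_span (X : Set (ι → F)) :
    scalarExtension L (Submodule.span F X) = Submodule.span L ((algebraMap F L ∘ ·) '' X) := by
  refine le_antisymm (Submodule.span_le.2 ?_)
    (Submodule.span_mono (Set.image_mono Submodule.subset_span))
  have hle : Submodule.span F X ≤ ((Submodule.span L ((algebraMap F L ∘ ·) '' X)).restrictScalars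
      F).comap ((Algebra.linearMap F L).compLeft ι) :=
    Submodule.span_le.2 fun f hf => Submodule.subset_span ⟨f, hf, rfl⟩
  rintro _ ⟨f, hf, rfl⟩
  exact hle hf

theorem finrank_scalarExtension [Finite ι] (C : Submodule F (ι → F)) :
    Module.finrank L (scalarExtension L C) = Module.finrank F C := by
  let v := Module.finBasis F C
  have hli : LinearIndependent F (C.subtype ∘ v) := v.linearIndependent.map' _ C.ker_subtype
  have hspan : Submodule.span F (Set.range (C.subtype ∘ v)) = C := by
    rw [Set.range_comp, ← Submodule.map_span, v.span_eq, Submodule.map_top, Submodule.range_subtype]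
  calc Module.finrank L (scalarExtension L C)
      = Module.finrank L (Submodule.span L
          (Set.range fun i => algebraMap F L ∘ (C.subtype ∘ v) i)) := by
        conv_lhs => rw [← hspan, scalarExtension_span, ← Set.range_comp]
        rfl
    _ = Module.finrank F C := by
        rw [finrank_span_eq_card (linearIndependent_algebraMap_comp_iff.2 hli), Fintype.card_fin]

-- An `F`-linear retraction `L → F`, applied entrywise, maps the `L`-span of `C` back into `C`.
theorem algebraMap_comp_mem_scalarExtension_iff {C : Submodule F (ι → F)} {f : ι → F} :
    algebraMap F L ∘ f ∈ scalarExtension L C ↔ f ∈ C := by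
  refine ⟨fun hf => ?_, algebraMap_comp_mem_scalarExtension⟩
  obtain ⟨π, hπ⟩ := (Algebra.linearMap F L).exists_leftInverse_of_injective
    (LinearMap.ker_eq_bot.2 (algebraMap F L).injective)
  have hmem : ∀ g ∈ scalarExtension L C, ∀ c : L, π ∘ (c • g) ∈ C := by
    intro g hg
    induction hg using Submodule.span_induction with
    | mem _ h =>
      obtain ⟨w, hw, rfl⟩ := h
      intro c
      have hcw : π ∘ (c • (algebraMap F L ∘ w)) = π c • w := by
        ext i
        simp [mul_comm c, ← Algebra.smul_def, mul_comm (w i)]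
      exact hcw ▸ C.smul_mem _ hw
    | zero =>
      intro c
      have hzero : π ∘ (c • (0 : ι → L)) = 0 := by
        ext i
        simp
      exact hzero ▸ C.zero_mem
    | add g h _ _ hg hh =>
      intro c
      have hadd : π ∘ (c • (g + h)) = π ∘ (c • g) + π ∘ (c • h) := by
        ext i
        simp
      exact hadd ▸ C.add_mem (hg c) (hh c)
    | smul a g _ hg => exact fun c => smul_smul c a g ▸ hg (c * a)
  have hretract : π ∘ ((1 : L) • (algebraMap F L ∘ f)) = f := by
    ext i
    simpa using LinearMap.congr_fun hπ (f i)
  exact hretract ▸ hmem _ hf 1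

end ScalarExtension

section Fourier

variable {s : ℕ} {r : Fin s → ℕ} [∀ k, NeZero (r k)] {α : Fin s → L}

/-- The additive character `i ↦ α^{i·j} = ∏ k, α_k^{i_k j_k}` of the index group, whose value at `i`
is the monomial `X^i` evaluated at `α^j`. -/
def rootChar (hα : ∀ k, IsPrimitiveRoot (α k) (r k)) (j : Idx r) : AddChar (Idx r) L where
  toFun i := ∏ k, α k ^ ((i k).val * (j k).val)
  map_zero_eq_one' := by simp
  map_add_eq_mul' u v := by
    rw [← Finset.prod_mul_distrib]
    refine Finset.prod_congr rfl fun k _ => ?_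
    rw [← pow_add, ← add_mul, pow_mul, pow_mul, Pi.add_apply, ZMod.val_add,
      ← pow_eq_pow_mod _ (hα k).pow_eq_one]

variable (hα : ∀ k, IsPrimitiveRoot (α k) (r k))

theorem rootChar_apply (j i : Idx r) :
    rootChar hα j i = ∏ k, α k ^ ((i k).val * (j k).val) := rfl

theorem fourier_eq_sum_rootChar (f : Idx r → F) (j : Idx r) :
    fourier α f j = ∑ i, algebraMap F L (f i) * rootChar hα j i := rfl

theorem rootChar_comm (j i : Idx r) : rootChar hα j i = rootChar hα i j := by
  simp only [rootChar_apply, mul_comm]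

theorem rootChar_single (j : Idx r) (k : Fin s) :
    rootChar hα j (Pi.single k 1) = α k ^ (j k).val := by
  rw [rootChar_apply, Finset.prod_eq_single k]
  · rw [Pi.single_eq_same, ZMod.val_one_eq_one_mod, pow_mul,
      ← pow_eq_pow_mod _ (hα k).pow_eq_one, pow_one]
  · intro l _ hl
    simp [hl]
  · simp

theorem rootChar_injective : Function.Injective (rootChar hα) := by
  intro j l h
  ext k
  have hpow : α k ^ (j k).val = α k ^ (l k).val := by
    rw [← rootChar_single hα, h, rootChar_single]
  exact ZMod.val_injective _ ((hα k).pow_inj (ZMod.val_lt _) (ZMod.val_lt _) hpow)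

theorem rootChar_zero : rootChar hα 0 = 0 := by
  ext i
  rw [rootChar_comm, AddChar.map_zero_eq_one, AddChar.zero_apply]

theorem sum_rootChar_apply (i : Idx r) :
    ∑ j, rootChar hα j i = if i = 0 then (Fintype.card (Idx r) : L) else 0 := by
  simp only [fun j => rootChar_comm hα j i, AddChar.sum_eq_ite, ← rootChar_zero hα,
    (rootChar_injective hα).eq_iff]

include hα in
theorem card_idx_ne_zero : (Fintype.card (Idx r) : L) ≠ 0 := by
  simp only [Fintype.card_pi, ZMod.card, Nat.cast_prod]
  exact Finset.prod_ne_zero_iff.2 fun k _ => (hα k).neZero'.out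

theorem fourier_inversion (f : Idx r → F) (i : Idx r) :
    ∑ j, fourier α f j * rootChar hα j (-i) = Fintype.card (Idx r) * algebraMap F L (f i) := by
  calc ∑ j, fourier α f j * rootChar hα j (-i)
      = ∑ u, algebraMap F L (f u) * ∑ j, rootChar hα j (u - i) := by
        simp only [fourier_eq_sum_rootChar hα, Finset.sum_mul, Finset.mul_sum, sub_eq_add_neg,
          AddChar.map_add_eq_mul, mul_assoc]
        exact Finset.sum_comm
    _ = Fintype.card (Idx r) * algebraMap F L (f i) := by
        simp [sum_rootChar_apply, sub_eq_zero, mul_comm]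

/-- `fourier α` as a linear map over the field of the words. -/
def fourierLinearMap (α : Fin s → L) : (Idx r → F) →ₗ[F] (Idx r → L) where
  toFun := fourier α
  map_add' f g := by
    ext j
    simp [fourier, add_mul, Finset.sum_add_distrib]
  map_smul' c f := by
    ext j
    simp [fourier, Algebra.smul_def, mul_assoc, Finset.mul_sum]

theorem fourier_algebraMap_comp (f : Idx r → F) :
    fourier α (algebraMap F L ∘ f) = fourier α f := rfl

include hα

theorem fourier_injective : Function.Injective (fourier α : (Idx r → F) → Idx r → L) := by
  intro f g hfg
  ext i
  apply (algebraMap F L).injective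
  apply mul_left_cancel₀ (card_idx_ne_zero hα)
  rw [← fourier_inversion hα, ← fourier_inversion hα, hfg]

theorem fourier_surjective : Function.Surjective (fourier α : (Idx r → L) → Idx r → L) :=
  (fourierLinearMap (F := L) α).injective_iff_surjective.1 (fourier_injective hα)

theorem fourier_conv (f g : Idx r → F) :
    fourier α (conv f g) = fourier α f * fourier α g := by
  ext j
  have hshift (u : Idx r) : ∑ i, algebraMap F L (g (i - u)) * rootChar hα j i =
      rootChar hα j u * fourier α g j := by
    rw [← Equiv.sum_comp (Equiv.addRight u), fourier_eq_sum_rootChar hα, Finset.mul_sum]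
    simp only [Equiv.coe_addRight, add_sub_cancel_right, AddChar.map_add_eq_mul]
    exact Finset.sum_congr rfl fun v _ => by ring
  calc fourier α (conv f g) j
      = ∑ u, algebraMap F L (f u) * ∑ i, algebraMap F L (g (i - u)) * rootChar hα j i := by
        simp only [fourier_eq_sum_rootChar hα, conv, map_sum, map_mul, Finset.sum_mul,
          Finset.mul_sum, mul_assoc]
        exact Finset.sum_comm
    _ = fourier α f j * fourier α g j := by
        simp only [hshift, ← mul_assoc, ← Finset.sum_mul, ← fourier_eq_sum_rootChar hα]

end Fourier

section DefiningSet

variable {s : ℕ} {r : Fin s → ℕ} [∀ k, NeZero (r k)] {α : Fin s → L}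

/-- The `L`-valued words whose Fourier transform vanishes on `D`, i.e. the abelian code over `L`
with defining set `D`. -/
def spectralKernel (α : Fin s → L) (D : Set (Idx r)) : Submodule L (Idx r → L) :=
  LinearMap.ker (LinearMap.funLeft L L ((↑) : D → Idx r) ∘ₗ fourierLinearMap α)

theorem mem_spectralKernel {D : Set (Idx r)} {g : Idx r → L} :
    g ∈ spectralKernel α D ↔ ∀ a ∈ D, fourier α g a = 0 := by
  simp [spectralKernel, fourierLinearMap, funext_iff, LinearMap.funLeft_apply]

variable (hα : ∀ k, IsPrimitiveRoot (α k) (r k))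
include hα

theorem finrank_spectralKernel_add_ncard (D : Set (Idx r)) :
    Module.finrank L (spectralKernel α D) + D.ncard = ∏ k, r k := by
  have hsurj : Function.Surjective
      (LinearMap.funLeft L L ((↑) : D → Idx r) ∘ₗ fourierLinearMap (F := L) α) :=
    (LinearMap.funLeft_surjective_of_injective L L _ Subtype.val_injective).comp
      (fourier_surjective hα)
  have hrank := LinearMap.finrank_range_add_finrank_ker
    (LinearMap.funLeft L L ((↑) : D → Idx r) ∘ₗ fourierLinearMap (F := L) α)
  rw [LinearMap.range_eq_top.2 hsurj, finrank_top, Module.finrank_fintype_fun_eq_card,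
    Module.finrank_fintype_fun_eq_card, Fintype.card_pi] at hrank
  simp only [ZMod.card] at hrank
  rw [← hrank, add_comm, ← Nat.card_coe_set_eq, Nat.card_eq_fintype_card]
  rfl

theorem inv_rootChar_mem_scalarExtension {C : Submodule F (Idx r → F)} (hC : IsAbelianCode C)
    {a : Idx r} (ha : a ∉ defSet r α C) : ⇑(rootChar hα a)⁻¹ ∈ scalarExtension L C := by
  obtain ⟨f, hf, hfa⟩ : ∃ f ∈ C, fourier α f a ≠ 0 := by
    simpa only [defSet, Set.mem_ofPred_eq, not_forall, exists_prop] using ha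
  have haverage : fourier α f a • ⇑(rootChar hα a)⁻¹ =
      ∑ u, rootChar hα a (-u) • (algebraMap F L ∘ fun i => f (i - u)) := by
    ext i
    rw [Finset.sum_apply, ← (Equiv.subLeft i).sum_comp, Pi.smul_apply, smul_eq_mul,
      fourier_eq_sum_rootChar hα, Finset.sum_mul]
    refine Finset.sum_congr rfl fun v _ => ?_
    simp only [Equiv.subLeft_apply, Pi.smul_apply, Function.comp_apply, sub_sub_cancel, neg_sub,
      smul_eq_mul, AddChar.inv_apply, sub_eq_add_neg v i, AddChar.map_add_eq_mul]
    ring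
  refine (Submodule.smul_mem_iff _ hfa).1 (haverage ▸ Submodule.sum_mem _ fun u _ => ?_)
  exact Submodule.smul_mem _ _ (algebraMap_comp_mem_scalarExtension (hC f hf u))

theorem scalarExtension_eq_spectralKernel {C : Submodule F (Idx r → F)} (hC : IsAbelianCode C) :
    scalarExtension L C = spectralKernel α (defSet r α C) := by
  apply le_antisymm
  · refine Submodule.span_le.2 ?_
    rintro _ ⟨f, hf, rfl⟩
    exact mem_spectralKernel.2 fun a ha => ha f hf
  · intro g hg
    have hexpand : (Fintype.card (Idx r) : L) • g =
        ∑ l, fourier α g l • ⇑(rootChar hα l)⁻¹ := by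
      ext i
      simp only [Pi.smul_apply, Finset.sum_apply, smul_eq_mul, AddChar.inv_apply,
        fourier_inversion hα, Algebra.algebraMap_self, RingHom.id_apply]
    refine (Submodule.smul_mem_iff _ (card_idx_ne_zero hα)).1
      (hexpand ▸ Submodule.sum_mem _ fun l _ => ?_)
    by_cases hl : l ∈ defSet r α C
    · rw [mem_spectralKernel.1 hg l hl, zero_smul]
      exact Submodule.zero_mem _
    · exact Submodule.smul_mem _ _ (inv_rootChar_mem_scalarExtension hα hC hl)

theorem finrank_add_ncard_defSet {C : Submodule F (Idx r → F)} (hC : IsAbelianCode C) :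
    Module.finrank F C + (defSet r α C).ncard = ∏ k, r k := by
  rw [← finrank_scalarExtension (L := L), scalarExtension_eq_spectralKernel hα hC,
    finrank_spectralKernel_add_ncard hα]

theorem mem_iff_fourier_eq_zero_on_defSet {C : Submodule F (Idx r → F)} (hC : IsAbelianCode C)
    {f : Idx r → F} : f ∈ C ↔ ∀ a ∈ defSet r α C, fourier α f a = 0 := by
  rw [← algebraMap_comp_mem_scalarExtension_iff (L := L),
    scalarExtension_eq_spectralKernel hα hC, mem_spectralKernel]
  simp only [fourier_algebraMap_comp]

end DefiningSet

section Conjugacy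

variable [Fintype F]

theorem mem_range_algebraMap_of_pow_card_eq {x : L} (hx : x ^ Fintype.card F = x) :
    x ∈ (algebraMap F L).range := by
  have hsplits : (Polynomial.X ^ Fintype.card F - Polynomial.X : Polynomial F).Splits := by
    simpa using (FiniteField.isSplittingField_sub F F).splits
  refine hsplits.mem_range_of_isRoot
    (FiniteField.X_pow_card_sub_X_ne_zero F Fintype.one_lt_card) ?_
  simp [Polynomial.IsRoot, hx]

variable {s : ℕ} {r : Fin s → ℕ} [∀ k, NeZero (r k)] {α : Fin s → L}
  (hα : ∀ k, IsPrimitiveRoot (α k) (r k))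

theorem rootChar_nsmul (m : ℕ) (j i : Idx r) : rootChar hα (m • j) i = rootChar hα j i ^ m := by
  rw [rootChar_comm, AddChar.map_nsmul_eq_pow, rootChar_comm]

include hα

theorem card_nsmul_surjective (K : Type*) [Field K] [Fintype K] [Algebra K L] :
    Function.Surjective fun j : Idx r => Fintype.card K • j := by
  refine Finite.injective_iff_surjective.1 fun j l hjl => rootChar_injective hα ?_
  ext i
  apply (FiniteField.frobeniusAlgHom K L).toRingHom.injective
  change rootChar hα j i ^ Fintype.card K = rootChar hα l i ^ Fintype.card K
  rw [← rootChar_nsmul, ← rootChar_nsmul]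
  exact congrArg (rootChar hα · i) hjl

theorem fourier_pow_card_nsmul (g : Idx r → L) (j : Idx r) :
    fourier α (fun i => g i ^ Fintype.card F) (Fintype.card F • j) =
      fourier α g j ^ Fintype.card F := by
  simp only [fourier_eq_sum_rootChar hα, rootChar_nsmul, Algebra.algebraMap_self, RingHom.id_apply,
    ← mul_pow]
  exact (map_sum (FiniteField.frobeniusAlgHom F L) _ _).symm

theorem exists_fourier_eq_of_conjugacy {h : Idx r → L}
    (hconj : ∀ j, h (Fintype.card F • j) = h j ^ Fintype.card F) :
    ∃ f : Idx r → F, fourier α f = h := by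
  obtain ⟨g, rfl⟩ := fourier_surjective hα h
  have hfixed : (fun i => g i ^ Fintype.card F) = g := by
    apply fourier_injective hα
    ext l
    obtain ⟨j, rfl⟩ := card_nsmul_surjective hα F l
    dsimp only
    rw [fourier_pow_card_nsmul hα, hconj]
  choose f hf using fun i =>
    mem_range_algebraMap_of_pow_card_eq (F := F) (congrFun hfixed i)
  exact ⟨f, by rw [← fourier_algebraMap_comp, show algebraMap F L ∘ f = g from funext hf]⟩

theorem exists_idempotent_fourier_eq_zero_iff {D : Set (Idx r)}
    (hD : ∀ j, Fintype.card F • j ∈ D ↔ j ∈ D) :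
    ∃ e : Idx r → F, conv e e = e ∧ ∀ j, fourier α e j = 0 ↔ j ∈ D := by
  obtain ⟨e, he⟩ := exists_fourier_eq_of_conjugacy (F := F) hα
      (h := (afforded r D : Idx r → L)) fun j => by
    by_cases hj : j ∈ D <;> simp [afforded, hD, hj, -nsmul_eq_mul]
  refine ⟨e, fourier_injective hα ?_, fun j => ?_⟩
  · ext j
    by_cases hj : j ∈ D <;> simp [fourier_conv hα, he, afforded, hj]
  · by_cases hj : j ∈ D <;> simp [he, afforded, hj]

end Conjugacy

section Window

variable {r : ℕ}

/-- The `m` cyclically consecutive residues `b, b + 1, …, b + m - 1` modulo `r`. -/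
def window (b : ZMod r) (m : ℕ) : Finset (ZMod r) :=
  (Finset.range m).image fun l : ℕ => b + l

theorem mem_window {b x : ZMod r} {m : ℕ} : x ∈ window b m ↔ ∃ l < m, b + (l : ZMod r) = x := by
  simp [window]

theorem card_window {m : ℕ} (hm : m ≤ r) (b : ZMod r) : (window b m).card = m := by
  rw [window, Finset.card_image_of_injOn, Finset.card_range]
  intro x hx y hy hxy
  rw [Finset.coe_range, Set.mem_Iio] at hx hy
  have hmod := (ZMod.natCast_eq_natCast_iff' x y r).1 (add_left_cancel hxy)
  rwa [Nat.mod_eq_of_lt (hx.trans_le hm), Nat.mod_eq_of_lt (hy.trans_le hm)] at hmod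

theorem exists_mem_window_notMem {S : Finset (ZMod r)} {m : ℕ} (hS : S.card < m) (hm : m ≤ r)
    (b : ZMod r) : ∃ x ∈ window b m, x ∉ S :=
  Finset.exists_mem_notMem_of_card_lt_card (by rwa [card_window hm])

-- Walk backwards from the start of the given window until `P` holds.
theorem exists_forall_window_succ_not [NeZero r] {P : ZMod r → Prop} (hP : ∃ c, P c) {b : ZMod r}
    {m : ℕ} (hwindow : ∀ x ∈ window b m, ¬P x) :
    ∃ c, P c ∧ ∀ x ∈ window (c + 1) m, ¬P x := by
  have hback : ∃ n : ℕ, P (b - 1 - n) := by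
    obtain ⟨c, hc⟩ := hP
    exact ⟨(b - 1 - c).val, by simpa using hc⟩
  refine ⟨b - 1 - (Nat.find hback : ℕ), Nat.find_spec hback, fun x hx => ?_⟩
  obtain ⟨l, hl, rfl⟩ := mem_window.1 hx
  rcases lt_or_ge l (Nat.find hback) with hlt | hge
  · convert Nat.find_min hback (Nat.sub_lt_of_pos_le l.succ_pos hlt) using 2
    rw [Nat.cast_sub (Nat.succ_le_of_lt hlt)]
    push_cast
    ring
  · refine hwindow _ (mem_window.2 ⟨l - Nat.find hback, by omega, ?_⟩)
    rw [Nat.cast_sub hge]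
    ring

end Window

section ApparentDistance

variable {s : ℕ}

theorem hypercol_ne_zero {r : Fin (s + 1) → ℕ} {M : Idx r → F} {i : Idx r} (hi : M i ≠ 0)
    (k : Fin (s + 1)) : hypercol M k (i k) ≠ 0 :=
  Function.ne_iff.2 ⟨k.removeNth i, by rwa [hypercol, Fin.insertNth_self_removeNth]⟩

theorem le_runLen {r : Fin (s + 1) → ℕ} {M : Idx r → F} {k : Fin (s + 1)} {b : ZMod (r k)} {m : ℕ}
    (hm : m < r k) (hzero : ∀ x ∈ window (b + 1) m, hypercol M k x = 0) : m ≤ runLen M k b := by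
  calc m = (Finset.Icc 1 m).card := by simp
    _ ≤ runLen M k b := Finset.card_le_card fun j hj => by
      simp only [Finset.mem_filter, Finset.mem_Ico, Finset.mem_Icc] at hj ⊢
      refine ⟨⟨hj.1, by omega⟩, fun t ht => hzero _ ?_⟩
      refine mem_window.2 ⟨t - 1, by omega, ?_⟩
      rw [Nat.cast_sub ht.1]
      ring

theorem runLen_lt {r : Fin (s + 1) → ℕ} {M : Idx r → F} {k : Fin (s + 1)} {b x : ZMod (r k)} {m : ℕ}
    (hx : x ∈ window (b + 1) m) (hne : hypercol M k x ≠ 0) : runLen M k b < m := by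
  obtain ⟨l, hl, rfl⟩ := mem_window.1 hx
  refine lt_of_le_of_lt ?_ hl
  calc runLen M k b ≤ (Finset.Icc 1 l).card := Finset.card_le_card fun j hj => by
        simp only [Finset.mem_filter, Finset.mem_Ico, Finset.mem_Icc] at hj ⊢
        refine ⟨hj.1.1, not_lt.1 fun hlj => hne ?_⟩
        rw [← hj.2 (l + 1) ⟨by omega, hlj⟩]
        congr 1
        push_cast
        ring
    _ = l := by simp

theorem mul_apd_hypercol_le_apd {r : Fin (s + 1) → ℕ} [∀ k, NeZero (r k)] (M : Idx r → F)
    (k : Fin (s + 1)) (b : ZMod (r k)) :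
    (runLen M k b + 1) * apd (fun j => r (k.succAbove j)) (hypercol M k b) ≤ apd r M := by
  rw [apd]
  refine le_trans ?_ (Finset.le_sup (Finset.mem_univ k))
  refine le_trans ?_ (Finset.le_sup (Finset.mem_univ (⟨b.val, ZMod.val_lt b⟩ : Fin (r k))))
  simp only [ZMod.natCast_zmod_val, le_refl]

theorem apd_le_of_forall_hypercol {r : Fin (s + 1) → ℕ} {M : Idx r → F} {d : ℕ}
    (h : ∀ k b, (runLen M k b + 1) * apd (fun j => r (k.succAbove j)) (hypercol M k b) ≤ d) :
    apd r M ≤ d := by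
  rw [apd]
  exact Finset.sup_le fun k _ => Finset.sup_le fun b _ => h k _

theorem apd_zero (r : Fin s → ℕ) : apd r (0 : Idx r → F) = 0 := by
  induction s with
  | zero => simp [apd]
  | succ s ih => exact Nat.le_zero.1 (apd_le_of_forall_hypercol fun k b => (ih _).symm ▸ by simp)

theorem apd_pos {r : Fin s → ℕ} [∀ k, NeZero (r k)] {M : Idx r → F} (hM : M ≠ 0) :
    0 < apd r M := by
  obtain ⟨i, hi⟩ := Function.ne_iff.1 hM
  induction s with
  | zero =>
    rw [apd, if_neg (Subsingleton.elim i finZeroElim ▸ hi)]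
    exact one_pos
  | succ s ih =>
    have hcol := hypercol_ne_zero hi 0
    obtain ⟨u, hu⟩ := Function.ne_iff.1 hcol
    have hpos := ih (r := fun j => r (Fin.succAbove 0 j)) hcol u hu
    exact (Nat.mul_pos (Nat.succ_pos _) hpos).trans_le (mul_apd_hypercol_le_apd M 0 (i 0))

theorem apd_le_one_of_forall_ne_zero {r : Fin s → ℕ} {M : Idx r → F} (hM : ∀ i, M i ≠ 0) :
    apd r M ≤ 1 := by
  induction s with
  | zero =>
    rw [apd]
    split_ifs <;> simp
  | succ s ih =>
    refine apd_le_of_forall_hypercol fun k b => ?_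
    have hrun : runLen M k b < 1 :=
      runLen_lt (mem_window.2 ⟨0, one_pos, rfl⟩) (Function.ne_iff.2 ⟨0, hM _⟩)
    exact Nat.mul_le_mul hrun (ih (M := hypercol M k b) fun i => hM _)

theorem lt_apd_of_eq_zero_on_window {r : Fin (s + 1) → ℕ} [∀ k, NeZero (r k)] {M : Idx r → F}
    (hM : M ≠ 0) {k : Fin (s + 1)} {b : ZMod (r k)} {m : ℕ} (hm : m < r k)
    (hzero : ∀ i, i k ∈ window b m → M i = 0) : m < apd r M := by
  obtain ⟨i, hi⟩ := Function.ne_iff.1 hM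
  obtain ⟨c, hc, hwindow⟩ := exists_forall_window_succ_not
    (P := fun x => hypercol M k x ≠ 0) ⟨i k, hypercol_ne_zero hi k⟩ (b := b) (m := m)
    fun x hx => not_not.2 (funext fun u => hzero _ (by simpa using hx))
  calc m < runLen M k c + 1 := Nat.lt_succ_of_le (le_runLen hm fun x hx => not_not.1 (hwindow x hx))
    _ ≤ (runLen M k c + 1) * apd (fun j => r (k.succAbove j)) (hypercol M k c) :=
      Nat.le_mul_of_pos_right _ (apd_pos hc)
    _ ≤ apd r M := mul_apd_hypercol_le_apd M k c

theorem mul_apd_hypercol_le_of_eq_zero_iff {r : Fin (s + 1) → ℕ} {k : Fin (s + 1)}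
    {S : Finset (ZMod (r k))} (hS : S.card < r k) {M : Idx r → F}
    (hM : ∀ i, M i = 0 ↔ i k ∈ S) (b : ZMod (r k)) :
    (runLen M k b + 1) * apd (fun j => r (k.succAbove j)) (hypercol M k b) ≤ S.card + 1 := by
  have hcol (x : ZMod (r k)) (u) : hypercol M k x u = 0 ↔ x ∈ S := by simp [hypercol, hM]
  by_cases hb : b ∈ S
  · rw [show hypercol M k b = 0 from funext fun u => (hcol b u).2 hb, apd_zero]
    exact Nat.zero_le _
  · obtain ⟨x, hx, hxS⟩ := exists_mem_window_notMem S.card.lt_succ_self hS (b + 1)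
    have hrun : runLen M k b < S.card + 1 :=
      runLen_lt hx (Function.ne_iff.2 ⟨0, fun h => hxS ((hcol x 0).1 h)⟩)
    have hone := apd_le_one_of_forall_ne_zero fun u h => hb ((hcol b u).1 h)
    simpa using Nat.mul_le_mul hrun hone

theorem apd_le_card_add_one {r : Fin (s + 1) → ℕ} {k : Fin (s + 1)} {S : Finset (ZMod (r k))}
    (hS : S.card < r k) {M : Idx r → F} (hM : ∀ i, M i = 0 ↔ i k ∈ S) :
    apd r M ≤ S.card + 1 := by
  induction s with
  | zero =>
    refine apd_le_of_forall_hypercol fun k' b => ?_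
    obtain rfl := Subsingleton.elim (α := Fin 1) k k'
    exact mul_apd_hypercol_le_of_eq_zero_iff hS hM b
  | succ s ih =>
    refine apd_le_of_forall_hypercol fun k' b => ?_
    by_cases hk : k = k'
    · subst hk
      exact mul_apd_hypercol_le_of_eq_zero_iff hS hM b
    · obtain ⟨j, rfl⟩ := Fin.exists_succAbove_eq hk
      have hcol (x : ZMod (r k')) (u) : hypercol M k' x u = 0 ↔ u j ∈ S := by simp [hypercol, hM]
      obtain ⟨y, -, hy⟩ := exists_mem_window_notMem S.card.lt_succ_self hS 0
      have hrun : runLen M k' b < 1 := runLen_lt (mem_window.2 ⟨0, one_pos, rfl⟩) <|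
        Function.ne_iff.2 ⟨fun l => if h : l = j then h ▸ y else 0,
          fun h => hy (by simpa using (hcol _ _).1 h)⟩
      simpa using Nat.mul_le_mul hrun (ih hS (hcol b))

end ApparentDistance

section Slab

variable {s : ℕ}

theorem bchDefSet_singleton {r : Fin s → ℕ} {q : ℕ} {k : Fin s} (hq : (q : ZMod (r k)) = 1)
    (δ b : Fin s → ℕ) :
    bchDefSet r q {k} δ b = {i | i k ∈ window (b k : ZMod (r k)) (δ k - 1)} := by
  ext i
  simp only [bchDefSet, qOrbit, Set.mem_iUnion, Finset.mem_singleton, Finset.mem_range,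
    exists_prop, exists_eq_left, Set.mem_ofPred_eq, mem_window, Nat.cast_add]
  constructor
  · rintro ⟨l, hl, a, ha, n, hn⟩
    exact ⟨l, hl, by rw [hn k, hq, one_pow, one_mul, ha]⟩
  · rintro ⟨l, hl, h⟩
    exact ⟨l, hl, i, h.symm, 0, fun _ => by simp⟩

variable {r : Fin (s + 1) → ℕ} [∀ k, NeZero (r k)]

theorem ncard_setOf_apply_mem (k : Fin (s + 1)) (S : Finset (ZMod (r k))) :
    {i : Idx r | i k ∈ S}.ncard = S.card * ∏ j, r (k.succAbove j) := by
  have himage : {i : Idx r | i k ∈ S} = Fin.insertNthEquiv (fun k => ZMod (r k)) k ''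
      (S ×ˢ (Finset.univ : Finset (∀ j, ZMod (r (k.succAbove j)))) : Finset _) := by
    ext i
    simp [Equiv.image_eq_preimage_symm]
  rw [himage, Set.ncard_image_of_injective _ (Equiv.injective _), Set.ncard_coe_finset,
    Finset.card_product, Finset.card_univ, Fintype.card_pi]
  simp only [ZMod.card]

variable {α : Fin (s + 1) → L} (hα : ∀ k, IsPrimitiveRoot (α k) (r k))
  {C : Submodule F (Idx r → F)} (hC : IsAbelianCode C) {k : Fin (s + 1)}
include hα hC

theorem finrank_of_defSet_eq {S : Finset (ZMod (r k))} (hD : defSet r α C = {i | i k ∈ S}) :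
    Module.finrank F C = (r k - S.card) * ∏ j, r (k.succAbove j) := by
  have hcount := finrank_add_ncard_defSet hα hC
  rw [hD, ncard_setOf_apply_mem, Fin.prod_univ_succAbove r k] at hcount
  rw [Nat.sub_mul, ← hcount, Nat.add_sub_cancel]

theorem dStarAlpha_of_defSet_eq_window [Fintype F] (hq : (Fintype.card F : ZMod (r k)) = 1)
    {b : ZMod (r k)} {m : ℕ} (hm : m < r k) (hD : defSet r α C = {i | i k ∈ window b m}) :
    dStarAlpha r α C = m + 1 := by
  have hcard : (window b m).card = m := card_window hm.le b
  obtain ⟨e, hidem, he⟩ := exists_idempotent_fourier_eq_zero_iff (F := F) hα (D := defSet r α C)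
    fun j => by simp [hD, hq]
  have heC : e ∈ C := (mem_iff_fourier_eq_zero_on_defSet hα hC).2 fun a => (he a).2
  have he0 : e ≠ 0 := by
    rintro rfl
    obtain ⟨x, -, hx⟩ := exists_mem_window_notMem (hcard.trans_lt hm) le_rfl b
    have hmem : (Function.update 0 k x : Idx r) ∈ defSet r α C := (he _).1 (by simp [fourier])
    exact hx (by simpa [hD] using hmem)
  have hupper : apd r (fourier α e) ≤ m + 1 := by
    simpa [hcard] using apd_le_card_add_one (hcard.trans_lt hm) fun i => by simp [he, hD]
  have hlower (f : Idx r → F) (hf : f ∈ C) (hf0 : f ≠ 0) : m + 1 ≤ apd r (fourier α f) := by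
    refine lt_apd_of_eq_zero_on_window (fun hzero => hf0 (fourier_injective hα ?_)) hm
      (b := b) fun i hi => (mem_iff_fourier_eq_zero_on_defSet hα hC).1 hf i (hD ▸ hi)
    simpa [funext_iff, fourier] using hzero
  unfold dStarAlpha
  apply le_antisymm
  · refine le_trans (Nat.sInf_le ?_) hupper
    exact ⟨e, heC, he0, hidem, rfl⟩
  · refine le_csInf ⟨_, e, heC, he0, hidem, rfl⟩ ?_
    rintro _ ⟨f, hf, hf0, -, rfl⟩
    exact hlower f hf hf0

end Slab

theorem reed_solomon_multiply_dimension_general {F : Type*} [Field F] [Fintype F]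
    {L : Type*} [Field L] [Algebra F L] {s : ℕ} {r : Fin (s + 1) → ℕ} [∀ k, NeZero (r k)]
    {k : Fin (s + 1)} {δ b : ℕ} (hr : r k ∣ Fintype.card F - 1) (hδ1 : 1 ≤ δ) (hδ2 : δ ≤ r k)
    {α : Fin (s + 1) → L} (hα : ∀ k, IsPrimitiveRoot (α k) (r k))
    {R : Submodule F (Idx (fun _ : Fin 1 => r k) → F)} (hR : IsAbelianCode R)
    (hRdef : defSet (fun _ : Fin 1 => r k) (fun _ => α k) R =
      bchDefSet (fun _ : Fin 1 => r k) (Fintype.card F) {0} (fun _ => δ) (fun _ => b))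
    {C : Submodule F (Idx r → F)} (hC : IsAbelianCode C)
    (hCdef : defSet r α C = bchDefSet r (Fintype.card F) {k} (fun _ => δ) (fun _ => b)) :
    Module.finrank F C = (r k - δ + 1) * ∏ j, r (k.succAbove j) ∧
    Module.finrank F C = (∏ j, r (k.succAbove j)) * Module.finrank F R ∧
    dStarAlpha r α C = δ := by
  have hq : (Fintype.card F : ZMod (r k)) = 1 := by
    have hcast := (ZMod.natCast_eq_zero_iff (Fintype.card F - 1) (r k)).2 hr
    rwa [Nat.cast_sub Fintype.card_pos, Nat.cast_one, sub_eq_zero] at hcast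
  rw [bchDefSet_singleton (r := fun _ : Fin 1 => r k) hq] at hRdef
  rw [bchDefSet_singleton hq] at hCdef
  have hcard : r k - (window (b : ZMod (r k)) (δ - 1)).card = r k - δ + 1 := by
    rw [card_window (by omega)]
    omega
  have hdimC := finrank_of_defSet_eq hα hC hCdef
  have hdimR := finrank_of_defSet_eq (fun _ : Fin 1 => hα k) hR hRdef
  rw [hcard] at hdimC hdimR
  refine ⟨hdimC, ?_, ?_⟩
  · rw [hdimC, hdimR, Fin.prod_univ_zero, mul_one, mul_comm]
  · rw [dStarAlpha_of_defSet_eq_window hα hC hq (by omega) hCdef, Nat.sub_add_cancel hδ1]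

/-- Let `R = B_q(α,δ,b)` be a Reed–Solomon code of length
`r = q − 1`.  Then for each `n` with `gcd(n,q) = 1` and each primitive `n`-th
root of unity `α'`, the multivariate BCH code `C = B_q((α',α),{2},{δ},{b})` in
`A_q(n,r)` satisfies `dim_{F_q}(C) = (r − δ + 1)·n = n·dim_{F_q}(R)` and
`d_{(α',α)}*(C) = δ`. -/
theorem reed_solomon_multiply_dimension
    {F : Type*} [Field F] [Fintype F]
    (L : Type*) [Field L] [Algebra F L]
    (n r δ b : ℕ) [NeZero n] [NeZero r]
    (hr : r = Fintype.card F - 1)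
    (hδ1 : 2 ≤ δ) (hδ2 : δ ≤ r)
    (hn : n.Coprime (Fintype.card F))
    (α : L) (hα : IsPrimitiveRoot α r)
    (α' : L) (hα' : IsPrimitiveRoot α' n)
    (R : Submodule F (Idx (fun _ : Fin 1 => r) → F)) (hR : IsAbelianCode R)
    (hRdef : defSet (fun _ : Fin 1 => r) (fun _ => α) R =
      bchDefSet (fun _ : Fin 1 => r) (Fintype.card F) {0} (fun _ => δ) (fun _ => b))
    [inst2 : ∀ k, NeZero ((Fin.cons n (fun _ : Fin 1 => r) : Fin 2 → ℕ) k)]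
    (C : Submodule F (Idx (Fin.cons n (fun _ : Fin 1 => r) : Fin 2 → ℕ) → F))
    (hC : IsAbelianCode C)
    (hCdef : defSet (Fin.cons n (fun _ : Fin 1 => r))
        (Fin.cons α' (fun _ : Fin 1 => α) : ∀ _ : Fin 2, L) C =
      bchDefSet (Fin.cons n (fun _ : Fin 1 => r)) (Fintype.card F)
        {1} (fun _ => δ) (fun _ => b)) :
    Module.finrank F C = (r - δ + 1) * n ∧
    Module.finrank F C = n * Module.finrank F R ∧
    dStarAlpha (Fin.cons n (fun _ : Fin 1 => r))
      (Fin.cons α' (fun _ : Fin 1 => α) : ∀ _ : Fin 2, L) C = δ := by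
  have h := reed_solomon_multiply_dimension_general (k := 1) (dvd_of_eq hr)
    (one_le_two.trans hδ1) hδ2 (Fin.forall_fin_two.2 ⟨hα', hα⟩) hR hRdef hC hCdef
  rwa [Fin.prod_univ_one] at h

end AbelianCodes
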